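/- Every matrix over a commutative ring R in which every ideal is principal admits a Smith normal form: for any m×n matrix M over R there exist invertible P ∈ GL_m(R) and Q ∈ GL_n(R) such that PMQ is diagonal with diagonal entries d_1, ..., d_r, 0, ..., 0 satisfying d_i | d_{i+1}. -/

import Mathlib

/-!
In a principal ideal ring `R` every row `(a, b)` can be turned into `(d, *)` with `d ∣ a, b` by an
invertible matrix. Write `a = d * a₀`, `b = d * b₀` and `d = a * x + b * y`. The element
`z = 1 - a₀ * x - b₀ * y` kills `d`, so `a₀` and `b₀` may be changed by multiples of `z`, and they
become coprime after such a change because `R` is Noetherian of Krull dimension at most one, hence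
has stable rank at most two.

By the ascending chain condition, some matrix equivalent to `M` has a corner entry `a` generating an
ideal that is maximal among those of the corner entries of matrices equivalent to `M`. By the
first step such an `a` divides its row and its column, which can therefore be cleared. Adding
another row to the first one keeps the corner, so `a` divides the entries of that row as well;
induct on the remaining block.
-/

section StableRank

variable {R : Type*} [CommRing R]

theorem exists_add_mul_mem_imp_mem_of_isAntichain {S : Set (Ideal R)} (hfin : S.Finite)
    (hprime : ∀ P ∈ S, P.IsPrime) (hS : IsAntichain (· ≤ ·) S) (b c : R) :
    ∃ t, ∀ P ∈ S, b + c * t ∈ P → c ∈ P := by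
  classical
  lift S to Finset (Ideal R) using hfin
  obtain ⟨t, ht_omit, ht_contain⟩ : ∃ t, (∀ P ∈ S, b ∉ P → t ∈ P) ∧ ∀ P ∈ S, b ∈ P → t ∉ P := by
    have hnot : ¬ (((S.filter (b ∉ ·)).inf id : Ideal R) : Set R) ⊆
        ⋃ P ∈ (S.filter (b ∈ ·) : Set (Ideal R)), (id P : Ideal R) := by
      rw [Ideal.subset_union_prime (f := id) ⊥ ⊥ fun P hP _ _ ↦ hprime P (Finset.mem_filter.1 hP).1]
      rintro ⟨Q, hQ, hle⟩
      obtain ⟨hQS, hbQ⟩ := Finset.mem_filter.1 hQ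
      obtain ⟨P, hP, hPQ⟩ := (hprime Q hQS).inf_le'.1 hle
      obtain ⟨hPS, hbP⟩ := Finset.mem_filter.1 hP
      exact hbP (hS.eq hPS hQS hPQ ▸ hbQ)
    obtain ⟨t, ht, ht'⟩ := Set.not_subset.1 hnot
    refine ⟨t, fun P hP hb ↦ ?_, fun P hP hb htP ↦ ht' ?_⟩
    · exact (Finset.inf_le (f := id) (Finset.mem_filter.2 ⟨hP, hb⟩) : _ ≤ P) ht
    · exact Set.mem_biUnion (Finset.mem_filter.2 ⟨hP, hb⟩) htP
  refine ⟨t, fun P hP hmem ↦ ?_⟩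
  by_cases hb : b ∈ P
  · have hct : c * t ∈ P := (Ideal.add_mem_iff_right P hb).1 hmem
    exact ((hprime P hP).mem_or_mem hct).resolve_right (ht_contain P hP hb)
  · have hct : c * t ∈ P := P.mul_mem_left c (ht_omit P hP hb)
    exact absurd ((Ideal.add_mem_iff_left P hct).1 hmem) hb

theorem exists_add_mul_mem_minimalPrimes_imp_mem [IsNoetherianRing R] (I : Ideal R) (b c : R) :
    ∃ t, ∀ P ∈ I.minimalPrimes, b + c * t ∈ P → c ∈ P :=
  exists_add_mul_mem_imp_mem_of_isAntichain (I.finite_minimalPrimes_of_isNoetherianRing R)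
    (fun _ hP ↦ hP.1.1) (setOfPred_minimal_antichain _) b c

theorem exists_isCoprime_add_mul_add_mul [IsNoetherianRing R] [Ring.KrullDimLE 1 R] {a b c : R}
    (h : ∃ x y z, a * x + b * y + c * z = 1) : ∃ s t, IsCoprime (a + c * s) (b + c * t) := by
  obtain ⟨x, y, z, hxyz⟩ := h
  obtain ⟨s, hs⟩ := exists_add_mul_mem_minimalPrimes_imp_mem ⊥ a c
  obtain ⟨t, ht⟩ := exists_add_mul_mem_minimalPrimes_imp_mem (Ideal.span {a + c * s}) b c
  have mem_of_mem (P : Ideal R) (hP : P.IsMaximal) (hs' : a + c * s ∈ P) (ht' : b + c * t ∈ P) :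
      c ∈ P := by
    by_contra hc
    have hPmin : P ∈ (Ideal.span {a + c * s}).minimalPrimes := by
      refine ⟨⟨hP.isPrime, (Ideal.span_singleton_le_iff_mem P).2 hs'⟩, fun Q ⟨hQ, hsQ⟩ hQP ↦ ?_⟩
      rcases Ring.krullDimLE_one_iff.1 ‹_› Q hQ with hQmin | hQmax
      · exact absurd (hQP (hs Q hQmin ((Ideal.span_singleton_le_iff_mem Q).1 hsQ))) hc
      · exact (hQmax.eq_of_le hP.ne_top hQP).ge
    exact hc (ht P hPmin ht')
  refine ⟨s, t, ?_⟩
  rw [← Ideal.isCoprime_span_singleton_iff, Ideal.isCoprime_iff_sup_eq]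
  by_contra hne
  obtain ⟨P, hP, hle⟩ := Ideal.exists_le_maximal _ hne
  have hs' : a + c * s ∈ P := hle (Ideal.mem_sup_left (Ideal.mem_span_singleton_self _))
  have ht' : b + c * t ∈ P := hle (Ideal.mem_sup_right (Ideal.mem_span_singleton_self _))
  have hc : c ∈ P := mem_of_mem P hP hs' ht'
  have ha : a ∈ P := (Ideal.add_mem_iff_left P (P.mul_mem_right s hc)).1 hs'
  have hb : b ∈ P := (Ideal.add_mem_iff_left P (P.mul_mem_right t hc)).1 ht'
  refine hP.ne_top ((Ideal.eq_top_iff_one P).2 (hxyz ▸ ?_))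
  exact add_mem (add_mem (P.mul_mem_right x ha) (P.mul_mem_right y hb)) (P.mul_mem_right z hc)

theorem exists_isCoprime_mul_add_mul_dvd [IsPrincipalIdealRing R] (a b : R) :
    ∃ x y, IsCoprime x y ∧ a * x + b * y ∣ a ∧ a * x + b * y ∣ b := by
  set d := IsBezout.gcd a b
  obtain ⟨x₀, y₀, hd⟩ : ∃ x₀ y₀, x₀ * a + y₀ * b = d := IsBezout.gcd_eq_sum a b
  obtain ⟨a₀, ha⟩ : d ∣ a := IsBezout.gcd_dvd_left a b
  obtain ⟨b₀, hb⟩ : d ∣ b := IsBezout.gcd_dvd_right a b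
  set z := 1 - a₀ * x₀ - b₀ * y₀ with hz
  have hdz : d * z = 0 := by linear_combination -hd + x₀ * ha + y₀ * hb + d * hz
  obtain ⟨s, t, x, y, hxy⟩ :=
    exists_isCoprime_add_mul_add_mul (a := a₀) (b := b₀) (c := z) ⟨x₀, y₀, 1, by ring⟩
  have hd' : a * x + b * y = d := by
    linear_combination x * ha + y * hb + d * hxy - (x * s + y * t) * hdz
  exact ⟨x, y, ⟨a₀ + z * s, b₀ + z * t, by linear_combination hxy⟩,
    hd' ▸ ⟨a₀, ha⟩, hd' ▸ ⟨b₀, hb⟩⟩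

end StableRank

section Equivalence

open Matrix

variable {R m n p : Type*} [CommRing R] [Fintype m] [DecidableEq m]
  [Fintype n] [DecidableEq n] [Fintype p] [DecidableEq p]

/-- Equivalence of rectangular matrices: `B = P * A * Q` with `P` and `Q` invertible. -/
def MatrixEquivalent (A B : Matrix m n R) : Prop :=
  ∃ (P : Matrix m m R) (Q : Matrix n n R), IsUnit P ∧ IsUnit Q ∧ P * A * Q = B

namespace MatrixEquivalent

variable {A B C : Matrix m n R}

theorem refl (A : Matrix m n R) : MatrixEquivalent A A :=
  ⟨1, 1, isUnit_one, isUnit_one, by rw [Matrix.one_mul, Matrix.mul_one]⟩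

theorem trans (hAB : MatrixEquivalent A B) (hBC : MatrixEquivalent B C) :
    MatrixEquivalent A C := by
  obtain ⟨P, Q, hP, hQ, rfl⟩ := hAB
  obtain ⟨P', Q', hP', hQ', rfl⟩ := hBC
  exact ⟨P' * P, Q * Q', hP'.mul hP, hQ.mul hQ', by simp only [Matrix.mul_assoc]⟩

theorem transpose (h : MatrixEquivalent A B) : MatrixEquivalent Aᵀ Bᵀ := by
  obtain ⟨P, Q, hP, hQ, rfl⟩ := h
  exact ⟨Qᵀ, Pᵀ, (isUnit_transpose Q).2 hQ, (isUnit_transpose P).2 hP, by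
    simp only [transpose_mul, Matrix.mul_assoc]⟩

theorem mul_right (A : Matrix m n R) {Q : Matrix n n R} (hQ : IsUnit Q) :
    MatrixEquivalent A (A * Q) :=
  ⟨1, Q, isUnit_one, hQ, by rw [Matrix.one_mul]⟩

theorem mul_left (A : Matrix m n R) {P : Matrix m m R} (hP : IsUnit P) :
    MatrixEquivalent A (P * A) :=
  ⟨P, 1, hP, isUnit_one, by rw [Matrix.mul_one]⟩

theorem dvd_apply (h : MatrixEquivalent A B) {a : R} (ha : ∀ i j, a ∣ A i j) (i : m) (j : n) :
    a ∣ B i j := by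
  obtain ⟨P, Q, -, -, rfl⟩ := h
  simp only [mul_apply]
  exact Finset.dvd_sum fun k _ ↦
    (Finset.dvd_sum fun l _ ↦ (ha l k).mul_left (P i l)).mul_right (Q k j)

end MatrixEquivalent

theorem exists_matrixEquivalent_submatrix_eq_mul (A : Matrix m n R) {f : p → n}
    (hf : f.Injective) {g : Matrix p p R} (hg : IsUnit g) :
    ∃ B, MatrixEquivalent A B ∧ B.submatrix id f = A.submatrix id f * g := by
  -- `E` is the inclusion of the coordinates in the range of `f`, and `1 + E * (g - 1) * Eᵀ` acts as
  -- `g` on them and trivially on the other coordinates.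
  let E : Matrix n p R := (1 : Matrix n n R).submatrix (Equiv.refl n) f
  have mul_E (X : Matrix m n R) : X * E = X.submatrix id f := mul_submatrix_one (Equiv.refl n) f X
  have hE : Eᵀ * E = 1 := by
    rw [mul_submatrix_one (Equiv.refl n) f Eᵀ]
    simpa [E] using submatrix_one f hf
  have hdet : (1 + E * ((g - 1) * Eᵀ)).det = g.det := by
    rw [det_one_add_mul_comm, Matrix.mul_assoc, hE, Matrix.mul_one, add_sub_cancel]
  refine ⟨A * (1 + E * ((g - 1) * Eᵀ)), .mul_right A ?_, ?_⟩
  · rwa [isUnit_iff_isUnit_det, hdet, ← isUnit_iff_isUnit_det]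
  · rw [← mul_E, ← mul_E, Matrix.mul_assoc, Matrix.add_mul, Matrix.mul_assoc, Matrix.mul_assoc, hE]
    simp only [Matrix.mul_sub, Matrix.mul_one, Matrix.one_mul, Matrix.mul_assoc, add_sub_cancel]

theorem exists_matrixEquivalent_apply_dvd [IsPrincipalIdealRing R] (A : Matrix m n R) (i : m)
    {j j' : n} (hj : j ≠ j') :
    ∃ B, MatrixEquivalent A B ∧ B i j ∣ A i j ∧ B i j ∣ A i j' := by
  obtain ⟨x, y, ⟨p, q, hpq⟩, hdvd, hdvd'⟩ := exists_isCoprime_mul_add_mul_dvd (A i j) (A i j')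
  have hdet : !![x, -q; y, p].det = 1 := by
    rw [det_fin_two_of]
    linear_combination hpq
  have hg : IsUnit !![x, -q; y, p] := (isUnit_iff_isUnit_det _).2 (hdet ▸ isUnit_one)
  have hinj : Function.Injective ![j, j'] := by
    simpa [Function.Injective, Fin.forall_fin_two] using ⟨hj, hj.symm⟩
  obtain ⟨B, hAB, hB⟩ := exists_matrixEquivalent_submatrix_eq_mul A hinj hg
  have hBij : B i j = A i j * x + A i j' * y := by
    simpa [mul_apply] using congr_fun₂ hB i 0
  exact ⟨B, hAB, hBij ▸ hdvd, hBij ▸ hdvd'⟩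

theorem exists_matrixEquivalent_row_eq_zero {A : Matrix m n R} {i₀ : m} {j₀ : n}
    (h : ∀ j, A i₀ j₀ ∣ A i₀ j) :
    ∃ B, MatrixEquivalent A B ∧ (∀ i, B i j₀ = A i j₀) ∧ ∀ j ≠ j₀, B i₀ j = 0 := by
  choose r hr using h
  let v : n → R := Function.update (-r) j₀ 0
  have hunit : IsUnit (1 + vecMulVec (Pi.single j₀ 1) v : Matrix n n R) := by
    refine IsNilpotent.isUnit_one_add ⟨2, ?_⟩
    simp [sq, vecMulVec_mul_vecMulVec, v]
  have hmul (i : m) (j : n) :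
      (A * (1 + vecMulVec (Pi.single j₀ 1) v) : Matrix m n R) i j = A i j + A i j₀ * v j := by
    simp [Matrix.mul_add, mul_vecMulVec, vecMulVec_apply]
  refine ⟨_, .mul_right A hunit, fun i ↦ ?_, fun j hj ↦ ?_⟩
  · simp [hmul, v]
  · simp [hmul, v, hj, hr j]

/-- The pivot `A i j` is maximal if no matrix equivalent to `A` has a proper divisor of it in the
same position. -/
def IsMaximalPivot (A : Matrix m n R) (i : m) (j : n) : Prop :=
  ∀ B, MatrixEquivalent A B → B i j ∣ A i j → A i j ∣ B i j

theorem exists_isMaximalPivot [IsNoetherianRing R] (A : Matrix m n R) (i : m) (j : n) :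
    ∃ B, MatrixEquivalent A B ∧ IsMaximalPivot B i j := by
  obtain ⟨B, hAB, hmax⟩ := exists_maximalFor_of_wellFoundedGT (MatrixEquivalent A)
    (fun C ↦ Ideal.span {C i j}) ⟨A, .refl A⟩
  refine ⟨B, hAB, fun C hBC hdvd ↦ ?_⟩
  rw [← Ideal.span_singleton_le_span_singleton] at hdvd ⊢
  exact hmax (hAB.trans hBC) hdvd

namespace IsMaximalPivot

variable {A B : Matrix m n R} {i₀ : m} {j₀ : n}

theorem of_matrixEquivalent (hA : IsMaximalPivot A i₀ j₀) (hAB : MatrixEquivalent A B)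
    (h : B i₀ j₀ = A i₀ j₀) : IsMaximalPivot B i₀ j₀ := fun C hBC hdvd ↦ by
  rw [h] at hdvd ⊢
  exact hA C (hAB.trans hBC) hdvd

theorem transpose (hA : IsMaximalPivot A i₀ j₀) : IsMaximalPivot Aᵀ j₀ i₀ :=
  fun B hAB hdvd ↦ hA Bᵀ hAB.transpose hdvd

theorem dvd_row [IsPrincipalIdealRing R] (hA : IsMaximalPivot A i₀ j₀) (j : n) :
    A i₀ j₀ ∣ A i₀ j := by
  obtain rfl | hj := eq_or_ne j₀ j
  · rfl
  · obtain ⟨B, hAB, hdvd, hdvd'⟩ := exists_matrixEquivalent_apply_dvd A i₀ hj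
    exact (hA B hAB hdvd).trans hdvd'

theorem dvd_col [IsPrincipalIdealRing R] (hA : IsMaximalPivot A i₀ j₀) (i : m) :
    A i₀ j₀ ∣ A i j₀ :=
  hA.transpose.dvd_row i

theorem dvd_of_col_eq_zero [IsPrincipalIdealRing R] (hA : IsMaximalPivot A i₀ j₀) {i : m}
    (hi : i ≠ i₀) (h : A i j₀ = 0) (j : n) : A i₀ j₀ ∣ A i j := by
  let B := transvection i₀ i (1 : R) * A
  have hrow (k : n) : B i₀ k = A i₀ k + A i k := by
    simp [B]
  have hpivot : B i₀ j₀ = A i₀ j₀ := by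
    rw [hrow, h, add_zero]
  have hAB : MatrixEquivalent A B := by
    refine .mul_left A ?_
    rw [isUnit_iff_isUnit_det, det_transvection_of_ne _ _ hi.symm]
    exact isUnit_one
  have hdvd := (hA.of_matrixEquivalent hAB hpivot).dvd_row j
  rw [hpivot, hrow] at hdvd
  exact (dvd_add_right (hA.dvd_row j)).1 hdvd

theorem exists_cross_eq_zero [IsPrincipalIdealRing R] (hA : IsMaximalPivot A i₀ j₀) :
    ∃ B, MatrixEquivalent A B ∧ IsMaximalPivot B i₀ j₀ ∧
      (∀ j ≠ j₀, B i₀ j = 0) ∧ ∀ i ≠ i₀, B i j₀ = 0 := by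
  obtain ⟨B, hAB, hBcol, hBrow⟩ := exists_matrixEquivalent_row_eq_zero hA.dvd_row
  have hB : IsMaximalPivot B i₀ j₀ := hA.of_matrixEquivalent hAB (hBcol i₀)
  obtain ⟨C, hBC, hCrow, hCcol⟩ := exists_matrixEquivalent_row_eq_zero hB.transpose.dvd_row
  have hBC' : MatrixEquivalent B Cᵀ := hBC.transpose
  refine ⟨Cᵀ, hAB.trans hBC', hB.of_matrixEquivalent hBC' (hCrow j₀), fun j hj ↦ ?_, hCcol⟩
  exact (hCrow j).trans (hBrow j hj)

end IsMaximalPivot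

end Equivalence

section SmithNormalForm

open Matrix

variable {R : Type*} {m n k : ℕ}

/-- The block diagonal matrix with blocks `!![a]` and `A`, with the rows and columns indexed by
`Fin` so that `a` is the corner entry. -/
def consDiagonal [Zero R] (a : R) (A : Matrix (Fin m) (Fin n) R) :
    Matrix (Fin (m + 1)) (Fin (n + 1)) R :=
  of (vecCons (vecCons a 0) fun i ↦ vecCons 0 (A i))

theorem consDiagonal_mul [NonUnitalNonAssocSemiring R] (a b : R) (A : Matrix (Fin m) (Fin n) R)
    (B : Matrix (Fin n) (Fin k) R) :
    consDiagonal a A * consDiagonal b B = consDiagonal (a * b) (A * B) := by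
  ext i j
  cases i using Fin.cases <;> cases j using Fin.cases <;>
    simp [consDiagonal, mul_apply, Fin.sum_univ_succ]

theorem consDiagonal_one [Zero R] [One R] :
    consDiagonal (1 : R) (1 : Matrix (Fin m) (Fin m) R) = 1 := by
  ext i j
  cases i using Fin.cases <;> cases j using Fin.cases <;>
    simp [consDiagonal, one_apply, Fin.succ_ne_zero, (Fin.succ_ne_zero _).symm]

theorem eq_consDiagonal [Zero R] {A : Matrix (Fin (m + 1)) (Fin (n + 1)) R}
    (hrow : ∀ j ≠ 0, A 0 j = 0) (hcol : ∀ i ≠ 0, A i 0 = 0) :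
    A = consDiagonal (A 0 0) (A.submatrix Fin.succ Fin.succ) := by
  ext i j
  cases i using Fin.cases <;> cases j using Fin.cases <;>
    simp [consDiagonal, hrow, hcol]

theorem isUnit_consDiagonal_one [CommRing R] {P : Matrix (Fin m) (Fin m) R} (hP : IsUnit P) :
    IsUnit (consDiagonal (1 : R) P) := by
  obtain ⟨P', hP'⟩ := hP.exists_right_inv
  refine .of_mul_eq_one (consDiagonal 1 P') ?_
  rw [consDiagonal_mul, hP', one_mul, consDiagonal_one]

theorem MatrixEquivalent.consDiagonal [CommRing R] (a : R) {A B : Matrix (Fin m) (Fin n) R}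
    (h : MatrixEquivalent A B) : MatrixEquivalent (consDiagonal a A) (consDiagonal a B) := by
  obtain ⟨P, Q, hP, hQ, rfl⟩ := h
  refine ⟨_, _, isUnit_consDiagonal_one hP, isUnit_consDiagonal_one hQ, ?_⟩
  rw [consDiagonal_mul, consDiagonal_mul, one_mul, mul_one]

theorem exists_matrixEquivalent_consDiagonal [CommRing R] [IsPrincipalIdealRing R]
    (A : Matrix (Fin (m + 1)) (Fin (n + 1)) R) :
    ∃ a N, MatrixEquivalent A (consDiagonal a N) ∧ ∀ i j, a ∣ N i j := by
  obtain ⟨B, hAB, hB⟩ := exists_isMaximalPivot A 0 0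
  obtain ⟨C, hBC, hC, hrow, hcol⟩ := hB.exists_cross_eq_zero
  refine ⟨C 0 0, C.submatrix Fin.succ Fin.succ, ?_, fun i j ↦ ?_⟩
  · exact eq_consDiagonal hrow hcol ▸ hAB.trans hBC
  · exact hC.dvd_of_col_eq_zero i.succ_ne_zero (hcol _ i.succ_ne_zero) j.succ

/-- Smith normal form: a rectangular diagonal matrix each of whose diagonal entries divides the
next one. The row and column indices live in different types and are compared as natural numbers. -/
def IsSmithNormalForm [Semiring R] (D : Matrix (Fin m) (Fin n) R) : Prop :=
  (∀ (i : Fin m) (j : Fin n), (i : ℕ) ≠ (j : ℕ) → D i j = 0) ∧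
  ∀ (i i' : Fin m) (j j' : Fin n), (i : ℕ) = (j : ℕ) → (i' : ℕ) = (j' : ℕ) →
    (i' : ℕ) = (i : ℕ) + 1 → D i j ∣ D i' j'

theorem IsSmithNormalForm.consDiagonal [Semiring R] {D : Matrix (Fin m) (Fin n) R}
    (hD : IsSmithNormalForm D) {a : R} (ha : ∀ i j, a ∣ D i j) :
    IsSmithNormalForm (consDiagonal a D) := by
  refine ⟨fun i j hij ↦ ?_, fun i i' j j' hij hij' hi ↦ ?_⟩
  · cases i using Fin.cases <;> cases j using Fin.cases
    · exact absurd rfl hij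
    · rfl
    · rfl
    · exact hD.1 _ _ (by simpa using hij)
  · obtain ⟨i', rfl⟩ := Fin.exists_succ_eq.2 (show i' ≠ 0 by rintro rfl; simp at hi)
    obtain ⟨j', rfl⟩ := Fin.exists_succ_eq.2 (show j' ≠ 0 by rintro rfl; simp at hij')
    cases i using Fin.cases <;> cases j using Fin.cases
    · exact ha i' j'
    · simp at hij
    · simp at hij
    · exact hD.2 _ _ _ _ (by simpa using hij) (by simpa using hij') (by simpa using hi)

theorem exists_matrixEquivalent_isSmithNormalForm [CommRing R] [IsPrincipalIdealRing R]
    (M : Matrix (Fin m) (Fin n) R) : ∃ D, MatrixEquivalent M D ∧ IsSmithNormalForm D := by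
  induction m generalizing n with
  | zero => exact ⟨M, .refl M, fun i ↦ i.elim0, fun i ↦ i.elim0⟩
  | succ m ih =>
    cases n with
    | zero => exact ⟨M, .refl M, fun _ j ↦ j.elim0, fun _ _ j ↦ j.elim0⟩
    | succ n =>
      obtain ⟨a, N, hMN, hdvd⟩ := exists_matrixEquivalent_consDiagonal M
      obtain ⟨D, hND, hD⟩ := ih N
      exact ⟨consDiagonal a D, hMN.trans (hND.consDiagonal a), hD.consDiagonal (hND.dvd_apply hdvd)⟩

end SmithNormalForm

/-- Every matrix over a commutative ring in which every ideal is principal admits a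
Smith normal form: there are invertible `P ∈ GL_m(R)`, `Q ∈ GL_n(R)` with `P * M * Q`
diagonal and the diagonal entries forming a divisibility chain. -/
theorem stmt_15 {R : Type*} [CommRing R] [IsPrincipalIdealRing R] {m n : ℕ}
    (M : Matrix (Fin m) (Fin n) R) :
    ∃ (P : Matrix (Fin m) (Fin m) R) (Q : Matrix (Fin n) (Fin n) R),
      IsUnit P ∧ IsUnit Q ∧
      (∀ (i : Fin m) (j : Fin n), (i : ℕ) ≠ (j : ℕ) → (P * M * Q) i j = 0) ∧
      (∀ (i i' : Fin m) (j j' : Fin n), (i : ℕ) = (j : ℕ) → (i' : ℕ) = (j' : ℕ) →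
        (i' : ℕ) = (i : ℕ) + 1 → (P * M * Q) i j ∣ (P * M * Q) i' j') := by
  obtain ⟨_, ⟨P, Q, hP, hQ, rfl⟩, hdiag, hdvd⟩ := exists_matrixEquivalent_isSmithNormalForm M
  exact ⟨P, Q, hP, hQ, hdiag, hdvd⟩
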